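/- Every diffuse group has the unique product property: for every two finite nonempty subsets A, B of the group there is an element x of the product set AB that can be written uniquely in the form x = ab with a ∈ A and b ∈ B. -/

import Mathlib

/-- A group `G` is diffuse if every finite nonempty subset `A` of `G` has an extremal point,
i.e. an element `a ∈ A` such that for every `g ≠ 1`, either `g*a ∉ A` or `g⁻¹*a ∉ A`. -/
def IsDiffuse (G : Type*) [Group G] : Prop :=
  ∀ A : Finset G, A.Nonempty →
    ∃ a ∈ A, ∀ g : G, g ≠ 1 → g * a ∉ A ∨ g⁻¹ * a ∉ A

section

open scoped Pointwise

variable {G : Type*} [Group G]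

/-- Extremal points of a finite subset `A` of a group, with respect to left translation. They are
the points whose existence in every nonempty `A` makes the group diffuse; membership in `A` is part
of the notion. -/
def IsExtremalPoint (A : Finset G) (a : G) : Prop :=
  a ∈ A ∧ ∀ g : G, g ≠ 1 → g * a ∉ A ∨ g⁻¹ * a ∉ A

theorem IsExtremalPoint.eq_one_of_mul_mem_of_inv_mul_mem {A : Finset G} {a g : G}
    (h : IsExtremalPoint A a) (hg : g * a ∈ A) (hg' : g⁻¹ * a ∈ A) : g = 1 := by
  by_contra hne
  exact (h.2 g hne).elim (· hg) (· hg')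

theorem IsExtremalPoint.uniqueMul [DecidableEq G] {A B : Finset G} {a b : G}
    (h : IsExtremalPoint (A * B) (a * b)) (ha : a ∈ A) (hb : b ∈ B) : UniqueMul A B a b := by
  intro a' b' ha' hb' hab
  have translate : a' * a⁻¹ * (a * b) = a' * b := by group
  have translate_inv : (a' * a⁻¹)⁻¹ * (a * b) = a * b' := by rw [← hab]; group
  have quotient_eq_one : a' * a⁻¹ = 1 :=
    h.eq_one_of_mul_mem_of_inv_mul_mem (translate ▸ Finset.mul_mem_mul ha' hb)
      (translate_inv ▸ Finset.mul_mem_mul ha hb')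
  obtain rfl : a' = a := mul_inv_eq_one.mp quotient_eq_one
  exact ⟨rfl, mul_left_cancel hab⟩

theorem IsDiffuse.uniqueProds (hG : IsDiffuse G) : UniqueProds G where
  uniqueMul_of_nonempty {A B} hA hB := by
    classical
    obtain ⟨c, hc⟩ : ∃ c, IsExtremalPoint (A * B) c := hG (A * B) (hA.mul hB)
    obtain ⟨a, ha, b, hb, rfl⟩ := Finset.mem_mul.mp hc.1
    exact ⟨a, ha, b, hb, hc.uniqueMul ha hb⟩

end

/-- Every diffuse group has the unique product property: for all finite nonempty subsets
`A, B` there is an element of `A*B` written uniquely as `a*b` with `a ∈ A`, `b ∈ B`. -/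
theorem uniqueProduct_of_isDiffuse {G : Type*} [Group G] (hG : IsDiffuse G)
    (A B : Finset G) (hA : A.Nonempty) (hB : B.Nonempty) :
    ∃ a ∈ A, ∃ b ∈ B, ∀ a' ∈ A, ∀ b' ∈ B, a' * b' = a * b → a' = a ∧ b' = b := by
  obtain ⟨a, ha, b, hb, hab⟩ := hG.uniqueProds.uniqueMul_of_nonempty hA hB
  exact ⟨a, ha, b, hb, fun _ ha' _ hb' h ↦ hab ha' hb' h⟩
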